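/- arXiv:1403.6954 — 2 statements merged into one kernel-verified Lean document; each statement's English description precedes it below -/
import Mathlib

section
/- Let m ≥ 1 and let N₁, N₂ be m×m complex matrices with N₁ invertible and N₂ invertible. Let λ be a complex number with λ^m = 1 and suppose N₁ * N₂ * N₁⁻¹ = λ • N₂. Suppose moreover that for all eigenvalues μ₁, μ₂ of N₂ (elements of the spectrum of N₂ over ℂ), μ₁^m = μ₂^m implies μ₁ = μ₂. Then λ = 1, and consequently N₁ * N₂ = N₂ * N₁. -/
/-!
Conjugate matrices have the same spectrum, so the spectrum of `N₂` is stable under multiplication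
by `lam`. For an eigenvalue `μ` of `N₂`, nonzero because `N₂` is invertible, `lam * μ` is then an
eigenvalue with the same `m`-th power, so `lam * μ = μ` and `lam = 1`.
-/

/-- Theorem 2.6: if `N₁ N₂ N₁⁻¹ = λ • N₂` with `λ^m = 1` and the eigenvalues of `N₂`
satisfy the 𝒫ₘ implication, then `λ = 1` and `N₁` and `N₂` commute. -/
theorem stmt_7 {m : ℕ} (hm : 1 ≤ m) (N₁ N₂ : Matrix (Fin m) (Fin m) ℂ)
    (h₁ : IsUnit N₁) (h₂ : IsUnit N₂) (lam : ℂ) (hlam : lam ^ m = 1)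
    (hconj : N₁ * N₂ * N₁⁻¹ = lam • N₂)
    (hP : ∀ μ₁ ∈ spectrum ℂ N₂, ∀ μ₂ ∈ spectrum ℂ N₂, μ₁ ^ m = μ₂ ^ m → μ₁ = μ₂) :
    lam = 1 ∧ N₁ * N₂ = N₂ * N₁ := by
  have : NeZero m := ⟨by omega⟩
  have hlam0 : lam ≠ 0 := by
    rintro rfl
    rw [zero_pow (by omega)] at hlam
    exact zero_ne_one hlam
  obtain ⟨u, rfl⟩ := h₁
  have hone : lam = 1 := by
    obtain ⟨μ, hμ⟩ := spectrum.nonempty_of_isAlgClosed_of_finiteDimensional ℂ N₂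
    have hμ0 : μ ≠ 0 := by
      rintro rfl
      exact (spectrum.zero_notMem_iff ℂ).2 h₂ hμ
    -- `lam * μ` is an eigenvalue of `lam • N₂`, which has the spectrum of its conjugate `N₂`.
    have hmem : lam * μ ∈ spectrum ℂ N₂ := by
      have h : (Units.mk0 lam hlam0) • μ ∈ spectrum ℂ ((Units.mk0 lam hlam0) • N₂) :=
        spectrum.smul_mem_smul_iff.2 hμ
      change lam * μ ∈ spectrum ℂ (lam • N₂) at h
      rwa [← hconj, ← Matrix.coe_units_inv, spectrum.units_conjugate] at h
    have h := hP _ hmem _ hμ (by rw [mul_pow, hlam, one_mul])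
    exact mul_right_cancel₀ hμ0 (h.trans (one_mul μ).symm)
  refine ⟨hone, ?_⟩
  rw [hone, one_smul, ← Matrix.coe_units_inv] at hconj
  exact (Units.mul_inv_eq_iff_eq_mul u).1 hconj
end

section
/- Let m ≥ 1, let M be an invertible m×m complex matrix, and let ν be a positive natural number such that for all eigenvalues λ₁, λ₂ of M (elements of the spectrum of M over ℂ), if the ratio λ₁/λ₂ is a root of unity then (λ₁/λ₂)^ν = 1. Then for every positive natural number k and all eigenvalues μ₁, μ₂ of the matrix power M^(ν·k), the implication μ₁^m = μ₂^m ⟹ μ₁ = μ₂ holds. -/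
/-!
By spectral mapping, eigenvalues of `M ^ (ν * k)` are `a ^ (ν * k)` and `b ^ (ν * k)` with `a`, `b`
nonzero eigenvalues of `M`. If their `m`-th powers agree, then `a / b` is a root of unity, so
`a ^ ν = b ^ ν` by the choice of `ν`, and raising to the power `k` gives the claim.
-/

/-- Theorem 3.1: if `ν` kills every root-of-unity ratio of eigenvalues of the invertible
matrix `M`, then every power `M^(ν*k)` (`k > 0`) satisfies the eigenvalue condition 𝒫ₘ. -/
theorem stmt_8 {m : ℕ} (hm : 1 ≤ m) (M : Matrix (Fin m) (Fin m) ℂ) (hM : IsUnit M)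
    (ν : ℕ) (hν : 0 < ν)
    (h : ∀ l₁ ∈ spectrum ℂ M, ∀ l₂ ∈ spectrum ℂ M,
      (∃ n : ℕ, 0 < n ∧ (l₁ / l₂) ^ n = 1) → (l₁ / l₂) ^ ν = 1) :
    ∀ k : ℕ, 0 < k →
      ∀ μ₁ ∈ spectrum ℂ (M ^ (ν * k)), ∀ μ₂ ∈ spectrum ℂ (M ^ (ν * k)),
        μ₁ ^ m = μ₂ ^ m → μ₁ = μ₂ := by
  intro k hk μ₁ h₁ μ₂ h₂ heq
  rw [spectrum.map_pow_of_pos M (Nat.mul_pos hν hk)] at h₁ h₂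
  obtain ⟨a, ha, rfl⟩ := h₁
  obtain ⟨b, hb, rfl⟩ := h₂
  dsimp only at heq ⊢
  have hb0 : b ≠ 0 := by
    rintro rfl
    exact spectrum.zero_notMem ℂ hM hb
  -- `a / b` is a root of unity: its power of exponent `ν * k * m` is `1`.
  have hroot : (a / b) ^ ν = 1 := by
    refine h a ha b hb ⟨ν * k * m, Nat.mul_pos (Nat.mul_pos hν hk) hm, ?_⟩
    rw [div_pow, pow_mul a, pow_mul b, heq]
    exact div_self (pow_ne_zero _ (pow_ne_zero _ hb0))
  rw [div_pow, div_eq_one_iff_eq (pow_ne_zero _ hb0)] at hroot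
  rw [pow_mul, pow_mul, hroot]
end
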